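/- arXiv:1906.02372 — 11 statements merged into one kernel-verified Lean document; each statement's English description precedes it below -/
import Mathlib

section
/- Let T be a rooted, countably infinite, locally finite tree and let S be the forward shift. For every f ∈ 𝓛 one has Sf ∈ 𝓛 and ‖Sf‖ ≤ ‖f‖; moreover, if T is leafless then ‖Sf‖ = ‖f‖ for every f ∈ 𝓛. -/
/-!
The derivative of `Sf` vanishes at the root and equals `f' ∘ par` elsewhere
(`LipTree.deriv_fshift`). Hence the values of `(Sf)'` are `0` together with the values of `f'` at
the vertices that have a child, so `‖Sf‖ ≤ ‖f‖`, and when every vertex has a child the two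
suprema agree.
-/

open scoped ENNReal NNReal

/-- A rooted, countably infinite, locally finite tree, encoded via its parent
function and depth function. Every non-root vertex `v` has a parent `par v`
one level closer to the root; iterating the parent function from any vertex
eventually reaches the root (this is forced by the depth function decreasing). -/
structure LipTree where
  V : Type
  countable : Countable V
  infinite : Infinite V
  root : V
  par : V → V
  par_root : par root = root
  depth : V → ℕ
  depth_root : depth root = 0
  depth_par : ∀ v, v ≠ root → depth v = depth (par v) + 1
  locFin : ∀ v : V, {w : V | w ≠ root ∧ par w = v}.Finite

namespace LipTree

variable (T : LipTree)

/-- The set of children of a vertex. -/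
def children (v : T.V) : Set T.V := {w | w ≠ T.root ∧ T.par w = v}

/-- `γ(v)`: the number of children of `v`. -/
noncomputable def gamma (v : T.V) : ℕ := (T.locFin v).toFinset.card

open Classical in
/-- `f'`, the "derivative" of `f` : `f'(o) = f(o)`, `f'(v) = f(v) - f(par v)` otherwise. -/
noncomputable def deriv (f : T.V → ℂ) : T.V → ℂ :=
  fun v => if v = T.root then f v else f v - f (T.par v)

/-- `‖f‖ = sup_{v} |f'(v)|`, valued in `[0,∞]`. -/
noncomputable def lnorm (f : T.V → ℂ) : ℝ≥0∞ := ⨆ v, (‖T.deriv f v‖₊ : ℝ≥0∞)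

/-- The Lipschitz space `𝓛`. -/
def Lip : Set (T.V → ℂ) := {f | T.lnorm f < ⊤}

/-- The little Lipschitz space `𝓛₀`: members of `𝓛` with `f'(v) → 0` as `|v| → ∞`. -/
def Lip0 : Set (T.V → ℂ) :=
  {f | T.lnorm f < ⊤ ∧
    Filter.Tendsto (T.deriv f) (Filter.comap T.depth Filter.atTop) (nhds 0)}

open Classical in
/-- The forward shift `S`. -/
noncomputable def fshift (f : T.V → ℂ) : T.V → ℂ :=
  fun v => if v = T.root then 0 else f (T.par v)

/-- The backward shift `B`: `(Bf)(v) = Σ_{w child of v} f(w)`. -/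
noncomputable def bshift (f : T.V → ℂ) : T.V → ℂ :=
  fun v => ∑ w ∈ (T.locFin v).toFinset, f w

/-- `T` is leafless: every vertex has a child. -/
def Leafless : Prop := ∀ v : T.V, (T.children v).Nonempty

/-- The sector (subtree) determined by `v`: `v` together with all its descendants. -/
def sector (v : T.V) : Set T.V := {w | ∃ n : ℕ, T.par^[n] w = v}

/-- `T` is homogeneous by sectors at level `N`. -/
def HomBySectors (N : ℕ) : Prop :=
  ∀ v : T.V, T.depth v = N → ∀ w ∈ T.sector v, T.gamma w = T.gamma v

/-- `T` is homogeneous of order `γ`. -/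
def Homogeneous (γ : ℕ) : Prop := ∀ v : T.V, T.gamma v = γ

/-- The operator norm of `Bⁿ` on `𝓛`: `sup { ‖Bⁿ f‖ : ‖f‖ ≤ 1 }`. -/
noncomputable def opNormBpow (n : ℕ) : ℝ≥0∞ :=
  ⨆ f ∈ {f : T.V → ℂ | T.lnorm f ≤ 1}, T.lnorm (T.bshift^[n] f)

/-- The operator norm of `B` on `𝓛`: `sup { ‖B f‖ : ‖f‖ ≤ 1 }`. -/
noncomputable def opNormB : ℝ≥0∞ :=
  ⨆ f ∈ {f : T.V → ℂ | T.lnorm f ≤ 1}, T.lnorm (T.bshift f)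

/-- The quantity `Λ = sup_{v ≠ o} (γ(v) + γ(par v) - 1 + |γ(v) - 1| + |γ(v) - γ(par v)|·|v|)`. -/
noncomputable def Lambda : ℝ≥0∞ :=
  ⨆ v ∈ {v : T.V | v ≠ T.root},
    ((T.gamma v + T.gamma (T.par v) - 1
      + ((T.gamma v : ℤ) - 1).natAbs
      + ((T.gamma v : ℤ) - (T.gamma (T.par v) : ℤ)).natAbs * T.depth v : ℕ) : ℝ≥0∞)

/-- An operator `A` on `𝓛₀` is hypercyclic if some orbit `{Aⁿ f}` is dense in `𝓛₀`. -/
def Hypercyclic (A : (T.V → ℂ) → (T.V → ℂ)) : Prop :=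
  ∃ f ∈ T.Lip0, ∀ g ∈ T.Lip0, ∀ ε : ℝ≥0∞, 0 < ε →
    ∃ n : ℕ, T.lnorm (A^[n] f - g) < ε

end LipTree

/-- Away from the root, the derivative of `Sf` is that of `f` read one level up; this includes
the children of the root, where `(Sf)(o) = 0` gives `(Sf)'(v) = f(o) = f'(o)`. -/
theorem LipTree.deriv_fshift (T : LipTree) (f : T.V → ℂ) {v : T.V} (hv : v ≠ T.root) :
    T.deriv (T.fshift f) v = T.deriv f (T.par v) := by
  by_cases hp : T.par v = T.root <;> simp [LipTree.deriv, LipTree.fshift, hv, hp]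

theorem LipTree.deriv_fshift_root (T : LipTree) (f : T.V → ℂ) :
    T.deriv (T.fshift f) T.root = 0 := by
  simp [LipTree.deriv, LipTree.fshift]

theorem LipTree.lnorm_fshift_le (T : LipTree) (f : T.V → ℂ) :
    T.lnorm (T.fshift f) ≤ T.lnorm f := by
  refine iSup_le fun v => ?_
  by_cases hv : v = T.root
  · subst hv
    simp [T.deriv_fshift_root]
  · rw [T.deriv_fshift f hv]
    exact le_iSup (fun w => (‖T.deriv f w‖₊ : ℝ≥0∞)) (T.par v)

/-- In a leafless tree every value of `f'` occurs as a value of `(Sf)'`, at a child. -/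
theorem LipTree.le_lnorm_fshift (T : LipTree) (hT : T.Leafless) (f : T.V → ℂ) :
    T.lnorm f ≤ T.lnorm (T.fshift f) := by
  refine iSup_le fun v => ?_
  obtain ⟨w, hw, rfl⟩ := hT v
  rw [← T.deriv_fshift f hw]
  exact le_iSup (fun u => (‖T.deriv (T.fshift f) u‖₊ : ℝ≥0∞)) w

/-- The forward shift maps `𝓛` to `𝓛` with `‖Sf‖ ≤ ‖f‖`; if `T` is
leafless then `‖Sf‖ = ‖f‖` for all `f ∈ 𝓛`. -/
theorem fshift_bounded_isometry (T : LipTree) :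
    (∀ f ∈ T.Lip, T.fshift f ∈ T.Lip ∧ T.lnorm (T.fshift f) ≤ T.lnorm f) ∧
    (T.Leafless → ∀ f ∈ T.Lip, T.lnorm (T.fshift f) = T.lnorm f) := by
  exact ⟨fun f hf => ⟨(T.lnorm_fshift_le f).trans_lt hf, T.lnorm_fshift_le f⟩,
    fun hT f _ => (T.lnorm_fshift_le f).antisymm (T.le_lnorm_fshift hT f)⟩
end

section
/- Let T be a rooted, countably infinite, locally finite, leafless tree and let S be the forward shift. For every λ ∈ ℂ with |λ| ≠ 1 and every f ∈ 𝓛, one has ‖Sf − λ·f‖ ≥ |1 − |λ||·‖f‖; that is, S − λI is bounded below on 𝓛, so the approximate point spectrum of S is contained in the unit circle. -/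
/-!
Write `g = Sf - λf`. Since `(Sf)'(o) = 0` and `(Sf)'(v) = f'(par v)` for `v ≠ o`, one has
`g'(o) = -λ f'(o)` and `g'(v) = f'(par v) - λ f'(v)` otherwise. The triangle inequality at `v`,
solved for `λ f'(v)`, gives `|λ|‖f‖ ≤ ‖g‖ + ‖f‖`. Solved for `f'(par v)`, it gives
`‖f‖ ≤ ‖g‖ + |λ|‖f‖`, because on a leafless tree every vertex is a parent. As `‖f‖ < ∞`, the term
`‖f‖`, respectively `|λ|‖f‖`, can be cancelled: the first bound settles `|λ| > 1`, the second
`|λ| < 1`.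
-/

open scoped ENNReal NNReal

namespace LipTree

lemma deriv_fshift_sub_root (T : LipTree) (lam : ℂ) (f : T.V → ℂ) :
    T.deriv (fun v => T.fshift f v - lam * f v) T.root = -(lam * T.deriv f T.root) := by
  simp [deriv, fshift]

lemma deriv_fshift_sub (T : LipTree) (lam : ℂ) (f : T.V → ℂ) {v : T.V} (hv : v ≠ T.root) :
    T.deriv (fun v => T.fshift f v - lam * f v) v
      = T.deriv f (T.par v) - lam * T.deriv f v := by
  by_cases hp : T.par v = T.root
  · simp only [deriv, fshift, hv, hp, if_true, if_false]
    ring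
  · simp only [deriv, fshift, hv, hp, if_false]
    ring

lemma enorm_deriv_le (T : LipTree) (f : T.V → ℂ) (v : T.V) : ‖T.deriv f v‖ₑ ≤ T.lnorm f :=
  le_iSup (fun v => ‖T.deriv f v‖ₑ) v

lemma enorm_mul_lnorm_le (T : LipTree) (lam : ℂ) (f : T.V → ℂ) :
    ‖lam‖ₑ * T.lnorm f ≤ T.lnorm (fun v => T.fshift f v - lam * f v) + T.lnorm f := by
  rw [lnorm, ENNReal.mul_iSup]
  refine iSup_le fun v => ?_
  change ‖lam‖ₑ * ‖T.deriv f v‖ₑ ≤ _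
  rw [← enorm_mul]
  have hg := T.enorm_deriv_le (fun v => T.fshift f v - lam * f v) v
  by_cases hv : v = T.root
  · subst hv
    rw [deriv_fshift_sub_root, enorm_neg] at hg
    exact hg.trans le_self_add
  · rw [T.deriv_fshift_sub lam f hv] at hg
    calc ‖lam * T.deriv f v‖ₑ
        = ‖T.deriv f (T.par v) - (T.deriv f (T.par v) - lam * T.deriv f v)‖ₑ := by
          rw [sub_sub_cancel]
      _ ≤ ‖T.deriv f (T.par v)‖ₑ + ‖T.deriv f (T.par v) - lam * T.deriv f v‖ₑ := enorm_sub_le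
      _ ≤ T.lnorm f + T.lnorm (fun v => T.fshift f v - lam * f v) :=
          add_le_add (T.enorm_deriv_le f _) hg
      _ = _ := add_comm _ _

lemma lnorm_le_add_enorm_mul (T : LipTree) (hT : T.Leafless) (lam : ℂ) (f : T.V → ℂ) :
    T.lnorm f ≤ T.lnorm (fun v => T.fshift f v - lam * f v) + ‖lam‖ₑ * T.lnorm f := by
  refine iSup_le fun u => ?_
  change ‖T.deriv f u‖ₑ ≤ _
  obtain ⟨v, hv, rfl⟩ := hT u
  have hg := T.enorm_deriv_le (fun v => T.fshift f v - lam * f v) v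
  rw [T.deriv_fshift_sub lam f hv] at hg
  calc ‖T.deriv f (T.par v)‖ₑ
      = ‖(T.deriv f (T.par v) - lam * T.deriv f v) + lam * T.deriv f v‖ₑ := by
        rw [sub_add_cancel]
    _ ≤ ‖T.deriv f (T.par v) - lam * T.deriv f v‖ₑ + ‖lam * T.deriv f v‖ₑ := enorm_add_le _ _
    _ ≤ _ := by
        rw [enorm_mul]
        exact add_le_add hg (mul_le_mul_right (T.enorm_deriv_le f v) _)

end LipTree

/-- On a leafless tree, for `|λ| ≠ 1` and `f ∈ 𝓛`,
`‖Sf - λf‖ ≥ |1 - |λ||·‖f‖`, i.e. `S - λI` is bounded below on `𝓛`. -/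
theorem fshift_sub_lambda_bounded_below (T : LipTree) (hT : T.Leafless) (lam : ℂ)
    (hlam : ‖lam‖ ≠ 1) (f : T.V → ℂ) (hf : f ∈ T.Lip) :
    (‖(1 : ℝ) - ‖lam‖‖₊ : ℝ≥0∞) * T.lnorm f ≤
      T.lnorm (fun v => T.fshift f v - lam * f v) := by
  have hfin : T.lnorm f ≠ ⊤ := ne_of_lt hf
  rcases lt_or_gt_of_ne hlam with h | h
  · have hc : (‖(1 : ℝ) - ‖lam‖‖₊ : ℝ≥0∞) + ‖lam‖ₑ = 1 := by
      have : ‖(1 : ℝ) - ‖lam‖‖₊ + ‖lam‖₊ = 1 := by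
        apply NNReal.eq
        push_cast
        rw [Real.norm_of_nonneg (by linarith)]
        ring
      rw [enorm_eq_nnnorm]
      exact_mod_cast this
    refine (ENNReal.add_le_add_iff_right (ENNReal.mul_ne_top enorm_ne_top hfin)).1
      (le_trans (le_of_eq ?_) (T.lnorm_le_add_enorm_mul hT lam f))
    rw [← add_mul, hc, one_mul]
  · have hc : (‖(1 : ℝ) - ‖lam‖‖₊ : ℝ≥0∞) + 1 = ‖lam‖ₑ := by
      have : ‖(1 : ℝ) - ‖lam‖‖₊ + 1 = ‖lam‖₊ := by
        apply NNReal.eq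
        push_cast
        rw [Real.norm_of_nonpos (by linarith)]
        ring
      rw [enorm_eq_nnnorm]
      exact_mod_cast this
    refine (ENNReal.add_le_add_iff_right hfin).1
      (le_trans (le_of_eq ?_) (T.enorm_mul_lnorm_le lam f))
    rw [← hc, add_mul, one_mul]
end

section
/- Let T be a rooted, countably infinite, locally finite tree. For every f : T → ℂ with Σ_{v ∈ T} |f(v)| < ∞ and every g ∈ 𝓛₀, both sums Σ_{v ∈ T} f(v)·(Sg)'(v) and Σ_{v ∈ T} (Bf)(v)·g'(v) converge absolutely and are equal: Σ_{v ∈ T} f(v)·(Sg)'(v) = Σ_{v ∈ T} (Bf)(v)·g'(v). (Under the duality pairing Φ_f(g) = Σ_v f(v)g'(v), this says the adjoint of the forward shift S on 𝓛₀ is the backward shift B on L¹(T).) -/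
/-!
The derivative of `S g` vanishes at the root and equals `g' (par v)` at every other vertex `v`.
Hence the pairing of `f` with `S g` is a sum of terms `f v * g' (par v)` over `v ≠ o`, absolutely
convergent because `g'` is bounded. Grouping the vertices by their parent, that is, summing along
the fibres of `par`, collects at each vertex `w` the finite sum of `f` over the children of `w`,
times `g' w`, which is `(B f) w * g' w`.
-/


open scoped ENNReal NNReal

namespace LipTree

variable (T : LipTree)

lemma deriv_fshift_root_s5 (g : T.V → ℂ) : T.deriv (T.fshift g) T.root = 0 := by
  simp [deriv, fshift]

lemma deriv_fshift_of_ne (g : T.V → ℂ) {v : T.V} (hv : v ≠ T.root) :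
    T.deriv (T.fshift g) v = T.deriv g (T.par v) := by
  by_cases h : T.par v = T.root <;> simp [deriv, fshift, hv, h]

lemma norm_deriv_le {g : T.V → ℂ} (hg : T.lnorm g < ⊤) (v : T.V) :
    ‖T.deriv g v‖ ≤ (T.lnorm g).toReal := by
  have h : (‖T.deriv g v‖₊ : ℝ≥0∞) ≤ T.lnorm g :=
    le_iSup (fun v => (‖T.deriv g v‖₊ : ℝ≥0∞)) v
  simpa using ENNReal.toReal_mono hg.ne h

lemma norm_deriv_fshift_le {g : T.V → ℂ} (hg : T.lnorm g < ⊤) (v : T.V) :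
    ‖T.deriv (T.fshift g) v‖ ≤ (T.lnorm g).toReal := by
  by_cases hv : v = T.root
  · subst hv
    simp [deriv_fshift_root_s5]
  · rw [deriv_fshift_of_ne T g hv]
    exact norm_deriv_le T hg _

/-- The fibre of `par` over `w` consists of the children of `w`, and of the root itself if `w` is
the root; the term at the root vanishes. -/
lemma tsum_fiber (f g : T.V → ℂ) (w : T.V) :
    ∑' v : T.par ⁻¹' {w}, f v * T.deriv (T.fshift g) v = T.bshift f w * T.deriv g w := by
  classical
  rw [tsum_subtype (T.par ⁻¹' {w}) (fun v => f v * T.deriv (T.fshift g) v),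
    tsum_eq_sum (s := (T.locFin w).toFinset), bshift, Finset.sum_mul]
  · refine Finset.sum_congr rfl fun v hv => ?_
    obtain ⟨h1, h2⟩ : v ≠ T.root ∧ T.par v = w := by simpa using hv
    rw [Set.indicator_of_mem (by simpa using h2), deriv_fshift_of_ne T g h1, h2]
  · intro v hv
    by_cases h : v = T.root
    · subst h
      simp [Set.indicator_apply, deriv_fshift_root_s5]
    · refine Set.indicator_of_notMem (fun h2 => hv ?_) _
      simpa using ⟨h, h2⟩

end LipTree

/-- duality: for `f` absolutely summable and `g ∈ 𝓛₀`, both pairings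
converge absolutely and `Σ_v f(v)(Sg)'(v) = Σ_v (Bf)(v) g'(v)`. -/
theorem fshift_adjoint_eq_bshift (T : LipTree) (f g : T.V → ℂ)
    (hf : Summable fun v => ‖f v‖) (hg : g ∈ T.Lip0) :
    Summable (fun v => ‖f v * T.deriv (T.fshift g) v‖) ∧
    Summable (fun v => ‖T.bshift f v * T.deriv g v‖) ∧
    ∑' v, f v * T.deriv (T.fshift g) v = ∑' v, T.bshift f v * T.deriv g v := by
  have hs : Summable (fun v => ‖f v * T.deriv (T.fshift g) v‖) := by
    refine Summable.of_nonneg_of_le (fun _ => norm_nonneg _) (fun v => ?_)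
      (hf.mul_right (T.lnorm g).toReal)
    rw [norm_mul]
    exact mul_le_mul_of_nonneg_left (T.norm_deriv_fshift_le hg.1 v) (norm_nonneg _)
  have key := hs.of_norm.hasSum.tsum_fiberwise T.par
  simp only [T.tsum_fiber f g] at key
  -- In `ℂ` unconditional convergence already gives absolute convergence.
  exact ⟨hs, key.summable.norm, key.tsum_eq.symm⟩
end

section
/- Let T be a rooted, countably infinite, locally finite tree which is homogeneous by sectors at the level N. Then the backward shift B maps 𝓛 into 𝓛 and for every f ∈ 𝓛 one has ‖Bf‖ ≤ max{2γ(o), Λ}·‖f‖, where Λ = sup{ γ(v) + γ(par(v)) − 1 + |γ(v) − 1| + |γ(v) − γ(par(v))|·|v| : v ∈ T, v ≠ o }. -/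
/-!
For `v ≠ o` with parent `p`, expanding every `f w` over children `w` as `f' w + f (par w)` gives

  `(Bf)'(v) = ∑_{w child of v} f'(w) - ∑_{u child of p, u ≠ v} f'(u)
                + (γ(v) - 1) f'(v) + (γ(v) - γ(p)) f(p)`,

while `(Bf)'(o) = ∑_{w child of o} f'(w) + γ(o) f(o)`. Since `|f'| ≤ ‖f‖` and, by telescoping along
the path to the root, `|f(p)| ≤ (|p| + 1) ‖f‖ = |v| ‖f‖`, the norm bound follows term by term
(`LipTree.norm_deriv_bshift_root`, `LipTree.norm_deriv_bshift`).

That `B` maps `𝓛` into itself then amounts to `Λ < ∞` (`LipTree.Lambda_lt_top`). Below level `N` the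
function `γ` is constant along each sector, so it takes only the values attained on the finitely
many vertices of depth at most `N`; hence `γ` is bounded. The only other source of unboundedness,
the factor `|v|`, occurs with coefficient `|γ(v) - γ(par v)|`, which vanishes when `|v| > N`.
-/

open scoped ENNReal NNReal

namespace LipTree

variable (T : LipTree)

/-! ### Finiteness of `Λ` -/

lemma mem_childFinset {v w : T.V} :
    w ∈ (T.locFin v).toFinset ↔ w ≠ T.root ∧ T.par w = v := by
  simp

lemma finite_depth_le (n : ℕ) : {v : T.V | T.depth v ≤ n}.Finite := by
  induction n with
  | zero =>
    refine (Set.finite_singleton T.root).subset fun v hv => ?_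
    by_contra h
    have := T.depth_par v h
    simp only [Set.mem_ofPred_eq] at hv
    omega
  | succ n ih =>
    refine ((Set.finite_singleton T.root).union
      (ih.biUnion fun v _ => T.locFin v)).subset fun v hv => ?_
    by_cases h : v = T.root
    · exact Or.inl h
    · have := T.depth_par v h
      simp only [Set.mem_ofPred_eq] at hv
      refine Or.inr (Set.mem_biUnion (x := T.par v) ?_ ⟨h, rfl⟩)
      simp only [Set.mem_ofPred_eq]
      omega

/-- Every vertex at depth at least `N` lies in the sector of a vertex at depth exactly `N`. -/
lemma exists_ancestor (N k : ℕ) : ∀ w : T.V, T.depth w = N + k →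
    ∃ u, T.depth u = N ∧ T.par^[k] w = u := by
  induction k with
  | zero => exact fun w hw => ⟨w, hw, rfl⟩
  | succ k ih =>
    intro w hw
    have hne : w ≠ T.root := by
      rintro rfl
      rw [T.depth_root] at hw
      omega
    have := T.depth_par w hne
    exact ih (T.par w) (by omega)

variable {T}

lemma HomBySectors.gamma_par {N : ℕ} (hN : T.HomBySectors N) {v : T.V} (hv : N < T.depth v) :
    T.gamma v = T.gamma (T.par v) := by
  have hne : v ≠ T.root := by
    rintro rfl
    rw [T.depth_root] at hv
    omega
  have hd := T.depth_par v hne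
  obtain ⟨u, hu, hk⟩ := T.exists_ancestor N (T.depth (T.par v) - N) (T.par v) (by omega)
  rw [hN u hu (T.par v) ⟨_, hk⟩, hN u hu v ⟨T.depth (T.par v) - N + 1, hk⟩]

lemma HomBySectors.exists_gamma_le {N : ℕ} (hN : T.HomBySectors N) :
    ∃ G : ℕ, ∀ v, T.gamma v ≤ G := by
  obtain ⟨G, hG⟩ := ((T.finite_depth_le N).image T.gamma).bddAbove
  have hG' : ∀ v, T.depth v ≤ N → T.gamma v ≤ G := fun v hv => hG ⟨v, hv, rfl⟩
  refine ⟨G, fun v => ?_⟩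
  rcases le_total (T.depth v) N with h | h
  · exact hG' v h
  · obtain ⟨u, hu, hk⟩ := T.exists_ancestor N (T.depth v - N) v (by omega)
    rw [hN u hu v ⟨_, hk⟩]
    exact hG' u hu.le

lemma Lambda_lt_top {N : ℕ} (hN : T.HomBySectors N) : T.Lambda < ⊤ := by
  obtain ⟨G, hG⟩ := hN.exists_gamma_le
  refine lt_of_le_of_lt (iSup₂_le fun v _ => ?_) (ENNReal.natCast_lt_top (3 * G + 1 + G * N))
  refine Nat.cast_le.2 ?_
  have h1 := hG v
  have h2 := hG (T.par v)
  have h3 : ((T.gamma v : ℤ) - (T.gamma (T.par v) : ℤ)).natAbs * T.depth v ≤ G * N := by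
    rcases le_or_gt (T.depth v) N with h | h
    · exact Nat.mul_le_mul (by omega) h
    · simp [hN.gamma_par h]
  omega

/-! ### The derivative of `Bf` -/

section Bounds

variable {f : T.V → ℂ} {M : ℝ}

lemma deriv_of_ne {v : T.V} (h : v ≠ T.root) : T.deriv f v = f v - f (T.par v) := by
  simp [deriv, h]

lemma deriv_root : T.deriv f T.root = f T.root := by
  simp [deriv]

/-- Growth of Lipschitz functions, by telescoping `f` along the path to the root. The `+ 1` comes
from the term `f'(o) = f(o)`. -/
lemma norm_le_depth (hM : ∀ v, ‖T.deriv f v‖ ≤ M) (n : ℕ) :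
    ∀ v : T.V, T.depth v = n → ‖f v‖ ≤ (n + 1) * M := by
  induction n with
  | zero =>
    intro v hv
    have : v = T.root := by
      by_contra h
      have := T.depth_par v h
      omega
    subst this
    simpa [deriv_root] using hM T.root
  | succ n ih =>
    intro v hv
    have hne : v ≠ T.root := by
      rintro rfl
      rw [T.depth_root] at hv
      omega
    have h1 := ih (T.par v) (by have := T.depth_par v hne; omega)
    have h2 := hM v
    rw [deriv_of_ne hne] at h2
    have h3 := norm_le_norm_add_norm_sub' (f v) (f (T.par v))
    push_cast
    linarith

lemma bshift_eq (v : T.V) :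
    T.bshift f v = ∑ w ∈ (T.locFin v).toFinset, T.deriv f w + T.gamma v * f v := by
  have : ∀ w ∈ (T.locFin v).toFinset, f w = T.deriv f w + f v := by
    intro w hw
    obtain ⟨h1, h2⟩ := T.mem_childFinset.1 hw
    rw [deriv_of_ne h1, h2]
    ring
  rw [bshift, Finset.sum_congr rfl this, Finset.sum_add_distrib]
  simp [gamma]

lemma norm_sum_deriv_le (hM : ∀ v, ‖T.deriv f v‖ ≤ M) (s : Finset T.V) :
    ‖∑ w ∈ s, T.deriv f w‖ ≤ s.card * M := by
  simpa using norm_sum_le_of_le s fun w _ => hM w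

lemma norm_deriv_bshift_root (hM : ∀ v, ‖T.deriv f v‖ ≤ M) :
    ‖T.deriv (T.bshift f) T.root‖ ≤ (2 * T.gamma T.root : ℕ) * M := by
  rw [deriv_root, bshift_eq]
  have h1 := norm_sum_deriv_le hM (T.locFin T.root).toFinset
  have h2 : ‖(T.gamma T.root : ℂ) * f T.root‖ ≤ T.gamma T.root * M := by
    rw [norm_mul, Complex.norm_natCast, ← deriv_root (f := f)]
    exact mul_le_mul_of_nonneg_left (hM _) (Nat.cast_nonneg _)
  refine (norm_add_le _ _).trans ?_
  rw [← gamma] at h1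
  push_cast
  linarith

open Classical in
/-- The term-by-term bound on `(Bf)'(v)`; the truncated subtraction is harmless because `v` itself is a
child of its parent, so `γ(par v) ≥ 1`. -/
lemma norm_deriv_bshift (hM : ∀ v, ‖T.deriv f v‖ ≤ M) {v : T.V} (hv : v ≠ T.root) :
    ‖T.deriv (T.bshift f) v‖ ≤ (T.gamma v + T.gamma (T.par v) - 1
      + ((T.gamma v : ℤ) - 1).natAbs
      + ((T.gamma v : ℤ) - (T.gamma (T.par v) : ℤ)).natAbs * T.depth v : ℕ) * M := by
  have hmem : v ∈ (T.locFin (T.par v)).toFinset := T.mem_childFinset.2 ⟨hv, rfl⟩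
  have hcard : ((T.locFin (T.par v)).toFinset.erase v).card + 1 = T.gamma (T.par v) :=
    Finset.card_erase_add_one hmem
  have key : T.deriv (T.bshift f) v = ∑ w ∈ (T.locFin v).toFinset, T.deriv f w
      - ∑ u ∈ (T.locFin (T.par v)).toFinset.erase v, T.deriv f u
      + (((T.gamma v : ℤ) - 1 : ℤ) : ℂ) * T.deriv f v
      + (((T.gamma v : ℤ) - (T.gamma (T.par v) : ℤ) : ℤ) : ℂ) * f (T.par v) := by
    rw [deriv_of_ne hv, bshift_eq, bshift_eq, ← Finset.add_sum_erase _ _ hmem, deriv_of_ne hv]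
    push_cast
    ring
  have h1 := norm_sum_deriv_le hM (T.locFin v).toFinset
  rw [← gamma] at h1
  have h2 := norm_sum_deriv_le hM ((T.locFin (T.par v)).toFinset.erase v)
  have norm_int : ∀ k : ℤ, ‖(k : ℂ)‖ = (k.natAbs : ℝ) := by
    intro k
    rw [Complex.norm_intCast, Nat.cast_natAbs, Int.cast_abs]
  have h3 : ‖(((T.gamma v : ℤ) - 1 : ℤ) : ℂ) * T.deriv f v‖
      ≤ (((T.gamma v : ℤ) - 1).natAbs : ℝ) * M := by
    rw [norm_mul, norm_int]
    exact mul_le_mul_of_nonneg_left (hM _) (Nat.cast_nonneg _)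
  have h4 : ‖(((T.gamma v : ℤ) - (T.gamma (T.par v) : ℤ) : ℤ) : ℂ) * f (T.par v)‖
      ≤ (((T.gamma v : ℤ) - (T.gamma (T.par v) : ℤ)).natAbs : ℝ) * (T.depth v * M) := by
    rw [norm_mul, norm_int]
    refine mul_le_mul_of_nonneg_left ?_ (Nat.cast_nonneg _)
    rw [T.depth_par v hv]
    push_cast
    exact norm_le_depth hM _ _ rfl
  have hsub : T.gamma v + T.gamma (T.par v) - 1
      = T.gamma v + ((T.locFin (T.par v)).toFinset.erase v).card := by omega
  rw [key, hsub]
  refine (norm_add_le _ _).trans ((add_le_add_left (norm_add_le _ _) _).trans ?_)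
  have h5 := norm_sub_le (∑ w ∈ (T.locFin v).toFinset, T.deriv f w)
    (∑ u ∈ (T.locFin (T.par v)).toFinset.erase v, T.deriv f u)
  simp only [Nat.cast_add, Nat.cast_mul]
  linarith

end Bounds

end LipTree

/-- If `T` is homogeneous by sectors at level `N`, then `B` maps `𝓛`
into `𝓛` and `‖Bf‖ ≤ max{2γ(o), Λ}·‖f‖`. -/
theorem bshift_bounded_of_homBySectors (T : LipTree) (N : ℕ) (hN : T.HomBySectors N)
    (f : T.V → ℂ) (hf : f ∈ T.Lip) :
    T.bshift f ∈ T.Lip ∧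
    T.lnorm (T.bshift f) ≤ max (2 * (T.gamma T.root : ℝ≥0∞)) T.Lambda * T.lnorm f := by
  have hf' : T.lnorm f < ⊤ := hf
  lift T.lnorm f to ℝ≥0 using hf'.ne with M hMdef
  have hM : ∀ v, ‖T.deriv f v‖ ≤ (M : ℝ) := by
    intro v
    have : (‖T.deriv f v‖₊ : ℝ≥0∞) ≤ M := by
      rw [hMdef]
      exact le_iSup (fun v => (‖T.deriv f v‖₊ : ℝ≥0∞)) v
    exact_mod_cast this
  have cast : ∀ (z : ℂ) (n : ℕ), ‖z‖ ≤ (n : ℝ) * M → (‖z‖₊ : ℝ≥0∞) ≤ (n : ℝ≥0∞) * M := by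
    intro z n h
    have : ‖z‖₊ ≤ (n : ℝ≥0) * M := by exact_mod_cast h
    exact_mod_cast this
  have hle : T.lnorm (T.bshift f) ≤ max (2 * (T.gamma T.root : ℝ≥0∞)) T.Lambda * M := by
    refine iSup_le fun v => ?_
    by_cases hv : v = T.root
    · subst hv
      refine (cast _ _ (LipTree.norm_deriv_bshift_root hM)).trans ?_
      gcongr
      push_cast
      exact le_max_left _ _
    · refine (cast _ _ (LipTree.norm_deriv_bshift hM hv)).trans ?_
      gcongr
      refine le_trans ?_ (le_max_right _ _)
      exact le_iSup₂_of_le (f := fun (v : T.V) (_ : v ∈ {v : T.V | v ≠ T.root}) =>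
        ((T.gamma v + T.gamma (T.par v) - 1 + ((T.gamma v : ℤ) - 1).natAbs
          + ((T.gamma v : ℤ) - (T.gamma (T.par v) : ℤ)).natAbs * T.depth v : ℕ) : ℝ≥0∞))
        v hv le_rfl
  refine ⟨lt_of_le_of_lt hle (ENNReal.mul_lt_top (max_lt ?_ (LipTree.Lambda_lt_top hN))
    ENNReal.coe_lt_top), hle⟩
  exact ENNReal.mul_lt_top (by simp) (ENNReal.natCast_lt_top _)
end

section
/- Let T be a rooted, countably infinite, locally finite tree. If the backward shift B maps 𝓛 into 𝓛 (that is, Bf ∈ 𝓛 for every f ∈ 𝓛), then T is homogeneous by sectors at some level N. -/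
/-! Apply the hypothesis to `f(v) = |v|`, which has `‖f‖ ≤ 1`. Then `(Bf)(v) = γ(v)(|v| + 1)`, and
this function has derivative bounded by some constant `C`. Summing the derivative along the path
from the root gives `γ(v)(|v| + 1) ≤ C(|v| + 1)`, so `γ ≤ C` everywhere. For `v ≠ o` the derivative
of `Bf` is `(γ(v) - γ(par v))|v| + γ(v)`, hence `|γ(v) - γ(par v)| |v| ≤ 2C`. As `γ` is
integer-valued, `γ(v) = γ(par v)` as soon as `|v| > 2C`, so any level `N > 2C` works. -/

open scoped ENNReal NNReal

namespace LipTree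

/-- Membership in `𝓛` as a real bound on the derivative, split at the root. -/
theorem exists_bound_of_mem_Lip (T : LipTree) {f : T.V → ℂ} (hf : f ∈ T.Lip) :
    ∃ C : ℝ, ‖f T.root‖ ≤ C ∧ ∀ v, v ≠ T.root → ‖f v - f (T.par v)‖ ≤ C := by
  have key : ∀ v, ‖T.deriv f v‖ ≤ (T.lnorm f).toReal := fun v => by
    have h1 : (‖T.deriv f v‖₊ : ℝ≥0∞) ≤ T.lnorm f :=
      le_iSup (fun v => (‖T.deriv f v‖₊ : ℝ≥0∞)) v
    simpa using ENNReal.toReal_mono (ne_of_lt hf) h1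
  refine ⟨(T.lnorm f).toReal, ?_, fun v hv => ?_⟩
  · simpa [deriv] using key T.root
  · simpa [deriv, hv] using key v

/-- A Lipschitz function grows at most linearly in the depth. -/
theorem norm_le_of_bound (T : LipTree) {f : T.V → ℂ} {C : ℝ} (h0 : ‖f T.root‖ ≤ C)
    (h1 : ∀ v, v ≠ T.root → ‖f v - f (T.par v)‖ ≤ C) (n : ℕ) :
    ∀ v, T.depth v = n → ‖f v‖ ≤ C * (n + 1) := by
  induction n with
  | zero =>
    intro v hv
    have hr : v = T.root := by
      by_contra hne
      have := T.depth_par v hne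
      omega
    simpa [hr] using h0
  | succ n ih =>
    intro v hv
    have hne : v ≠ T.root := by
      rintro rfl
      have := T.depth_root
      omega
    have hp := ih (T.par v) (by have := T.depth_par v hne; omega)
    have h2 := norm_le_norm_add_norm_sub' (f v) (f (T.par v))
    have h3 := h1 v hne
    push_cast
    linarith

theorem depth_mem_Lip (T : LipTree) : (fun v => (T.depth v : ℂ)) ∈ T.Lip := by
  refine lt_of_le_of_lt (iSup_le fun v => ?_) ENNReal.one_lt_top
  by_cases hv : v = T.root
  · simp [deriv, hv, T.depth_root]
  · simp [deriv, hv, T.depth_par v hv]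

theorem bshift_depth (T : LipTree) (v : T.V) :
    T.bshift (fun v => (T.depth v : ℂ)) v = T.gamma v * (T.depth v + 1) := by
  have : ∀ w ∈ (T.locFin v).toFinset, (T.depth w : ℂ) = T.depth v + 1 := by
    intro w hw
    obtain ⟨hw1, hw2⟩ := (Set.Finite.mem_toFinset _).1 hw
    rw [T.depth_par w hw1, hw2]
    push_cast
    rfl
  simp [bshift, gamma, Finset.sum_congr rfl this, mul_add]

theorem depth_iterate_par_le (T : LipTree) (n : ℕ) (w : T.V) :
    T.depth (T.par^[n] w) ≤ T.depth w := by
  induction n generalizing w with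
  | zero => simp
  | succ n ih =>
    rw [Function.iterate_succ_apply]
    refine (ih _).trans ?_
    by_cases hw : w = T.root
    · rw [hw, T.par_root]
    · have := T.depth_par w hw
      omega

/-- If `γ` agrees at `v` and `par v` for all `v` of depth at least `N`, then `γ` is constant on
each sector starting at level `N`. -/
theorem homBySectors_of_gamma_par (T : LipTree) (N : ℕ)
    (hN : ∀ v, v ≠ T.root → N ≤ T.depth v → T.gamma v = T.gamma (T.par v)) :
    T.HomBySectors N := by
  rintro v hv w ⟨n, hn⟩
  induction n generalizing w with
  | zero => rw [← hn, Function.iterate_zero_apply]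
  | succ n ih =>
    have hd := T.depth_iterate_par_le (n + 1) w
    rw [hn, hv] at hd
    rw [← ih (T.par w) (by rwa [Function.iterate_succ_apply] at hn)]
    by_cases hw : w = T.root
    · rw [hw, T.par_root]
    · exact hN w hw hd

end LipTree

/-- If `B` maps `𝓛` into `𝓛`, then `T` is homogeneous by sectors at
some level `N`. -/
theorem homBySectors_of_bshift_maps_lip (T : LipTree)
    (h : ∀ f ∈ T.Lip, T.bshift f ∈ T.Lip) : ∃ N : ℕ, T.HomBySectors N := by
  obtain ⟨C, h0, h1⟩ := T.exists_bound_of_mem_Lip (h _ T.depth_mem_Lip)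
  have hγ : ∀ v, (T.gamma v : ℝ) ≤ C := by
    intro v
    have h2 := T.norm_le_of_bound h0 h1 _ v rfl
    have hpos : (0 : ℝ) < T.depth v + 1 := by positivity
    have hcast : (T.gamma v * (T.depth v + 1) : ℂ) = ((T.gamma v * (T.depth v + 1) : ℝ) : ℂ) := by
      push_cast
      rfl
    rw [T.bshift_depth, hcast, Complex.norm_of_nonneg (by positivity)] at h2
    exact le_of_mul_le_mul_right h2 hpos
  obtain ⟨N, hN⟩ := exists_nat_gt (2 * C)
  refine ⟨N, T.homBySectors_of_gamma_par N fun v hv hd => ?_⟩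
  have h2 := h1 v hv
  have hdp : (T.depth v : ℝ) = T.depth (T.par v) + 1 := by exact_mod_cast T.depth_par v hv
  have hcast : (T.gamma v * (T.depth v + 1) - T.gamma (T.par v) * (T.depth (T.par v) + 1) : ℂ)
      = (((T.gamma v - T.gamma (T.par v)) * T.depth v + T.gamma v : ℝ) : ℂ) := by
    rw [T.depth_par v hv]
    push_cast
    ring
  rw [T.bshift_depth, T.bshift_depth, hcast, Complex.norm_real, Real.norm_eq_abs, abs_le] at h2
  have hdN : (N : ℝ) ≤ T.depth v := by exact_mod_cast hd
  have hv0 := hγ v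
  have hg0 : (0 : ℝ) ≤ T.gamma v := Nat.cast_nonneg _
  -- Distinct natural numbers differ by at least one, so inequality would force `|v| ≤ 2C`.
  rcases lt_trichotomy (T.gamma v) (T.gamma (T.par v)) with hlt | heq | hgt
  · have : (T.gamma v : ℝ) + 1 ≤ T.gamma (T.par v) := by exact_mod_cast hlt
    nlinarith [h2.1]
  · exact heq
  · have : (T.gamma (T.par v) : ℝ) + 1 ≤ T.gamma v := by exact_mod_cast hgt
    nlinarith [h2.2]
end

section
/- Let T be a rooted, countably infinite, locally finite tree. If the backward shift B maps 𝓛₀ into 𝓛₀ (that is, Bf ∈ 𝓛₀ for every f ∈ 𝓛₀), then T is homogeneous by sectors at some level N. -/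
/-!
The constant function `1` lies in `𝓛₀`, since its derivative vanishes off the root, and
`B 1 = γ`. So `γ' → 0`; as `γ` is integer-valued, `γ(v) = γ(par v)` for all `v` of large
enough depth, and `γ` is then constant along every descending path from such a level.
-/

open scoped ENNReal NNReal

namespace LipTree

variable (T : LipTree)

lemma deriv_one (v : T.V) (hv : v ≠ T.root) : T.deriv (fun _ => 1) v = 0 := by
  simp [deriv, hv]

lemma one_mem_lip0 : (fun _ => (1 : ℂ)) ∈ T.Lip0 := by
  constructor
  · refine lt_of_le_of_lt (iSup_le fun v => ?_) ENNReal.one_lt_top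
    by_cases hv : v = T.root
    · simp [deriv, hv]
    · simp [T.deriv_one v hv]
  · refine tendsto_const_nhds.congr' ?_
    have h1 := (Filter.eventually_ge_atTop 1).comap T.depth
    filter_upwards [h1] with v hv
    refine (T.deriv_one v ?_).symm
    rintro rfl
    simp [T.depth_root] at hv

lemma bshift_one : T.bshift (fun _ => (1 : ℂ)) = fun v => (T.gamma v : ℂ) := by
  funext v
  simp [bshift, gamma]

/-- If `γ' → 0` then `γ` agrees with its value at the parent at all large depths, because
distinct integers differ by at least `1`. -/
lemma exists_gamma_eq_par
    (h : Filter.Tendsto (T.deriv fun v => (T.gamma v : ℂ))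
      (Filter.comap T.depth Filter.atTop) (nhds 0)) :
    ∃ N, ∀ v, N ≤ T.depth v → v ≠ T.root → T.gamma v = T.gamma (T.par v) := by
  have h1 := h.eventually (Metric.ball_mem_nhds (0 : ℂ) one_pos)
  rw [Filter.eventually_comap, Filter.eventually_atTop] at h1
  obtain ⟨N, hN⟩ := h1
  refine ⟨N, fun v hv hr => ?_⟩
  have h2 : T.deriv (fun v => (T.gamma v : ℂ)) v ∈ Metric.ball (0 : ℂ) 1 := hN _ hv v rfl
  rw [mem_ball_zero_iff, deriv, if_neg hr] at h2
  have h3 : ‖(((T.gamma v : ℤ) - (T.gamma (T.par v) : ℤ) : ℤ) : ℂ)‖ < 1 := by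
    push_cast
    exact h2
  rw [Complex.norm_intCast] at h3
  have h4 : |(T.gamma v : ℤ) - (T.gamma (T.par v) : ℤ)| < 1 := by exact_mod_cast h3
  have h5 := Int.abs_lt_one_iff.mp h4
  omega

end LipTree

/-- If `B` maps `𝓛₀` into `𝓛₀`, then `T` is homogeneous by sectors at
some level `N`. -/
theorem homBySectors_of_bshift_maps_lip0 (T : LipTree)
    (h : ∀ f ∈ T.Lip0, T.bshift f ∈ T.Lip0) : ∃ N : ℕ, T.HomBySectors N := by
  have h1 := (h _ T.one_mem_lip0).2
  rw [T.bshift_one] at h1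
  obtain ⟨N, hN⟩ := T.exists_gamma_eq_par h1
  refine ⟨N, fun v hv w hw => ?_⟩
  obtain ⟨n, hn⟩ := hw
  -- The depth bound is carried along so that `hN` applies at each descendant of `v`.
  suffices H : T.gamma w = T.gamma v ∧ N ≤ T.depth w from H.1
  induction n generalizing w with
  | zero =>
    obtain rfl : w = v := hn
    exact ⟨rfl, hv.ge⟩
  | succ n ih =>
    rw [Function.iterate_succ_apply] at hn
    obtain ⟨hg, hd⟩ := ih _ hn
    by_cases hr : w = T.root
    · -- The root is its own parent, so here the inductive hypothesis is already about `w`.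
      rw [hr, T.par_root] at hg hd
      rw [hr]
      exact ⟨hg, hd⟩
    · have hdw : N ≤ T.depth w := by
        have := T.depth_par w hr
        omega
      exact ⟨(hN w hdw hr).trans hg, hdw⟩
end

section
/- Let T be a rooted, countably infinite, locally finite tree which is homogeneous by sectors at the level N with N ≥ 1, and let Γ' = max{ γ(v) : v ∈ T, 0 < |v| ≤ N }. Then the operator norm of the backward shift B on 𝓛 satisfies ‖B‖ ≥ max{ 2γ(o), 3Γ' − 2 }. -/
/-!
The two lower bounds are attained by explicit functions in the unit ball of `𝓛`.

* For `2γ(o)`: the function equal to `1` at the root and `2` elsewhere, whose image under `B` takes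
  the value `2γ(o)` at the root (`two_mul_gamma_root_le`).
* For `3Γ' - 2`: given `v ≠ o` with parent `p`, take the function (`bump`) equal to `1` at `p`, `2`
  at `v`, `3` on the children of `v` and `0` on the siblings of `v`. Then `(Bf)(v) = 3γ(v)` and
  `(Bf)(p) = 2`, whatever the number of children of `p`, so `(Bf)'(v) = 3γ(v) - 2`
  (`three_mul_gamma_sub_two_le`).
  Returning to the value `2` on the grandchildren of `v` and to `1` everywhere else keeps every
  increment at most `1` in modulus.
-/

open scoped ENNReal NNReal

namespace LipTree

variable (T : LipTree)

lemma natCast_le_opNormB {f : T.V → ℂ} (hf : ∀ w, ‖T.deriv f w‖ ≤ 1) {v : T.V} {n : ℕ}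
    (h : T.deriv (T.bshift f) v = (n : ℂ)) : (n : ℝ≥0∞) ≤ T.opNormB := by
  have hl : T.lnorm f ≤ 1 := iSup_le fun w => by exact_mod_cast hf w
  refine le_trans ?_ (le_iSup₂_of_le f hl le_rfl)
  refine le_trans ?_ (le_iSup _ v)
  rw [h]
  simp

lemma two_mul_gamma_root_le : ((2 * T.gamma T.root : ℕ) : ℝ≥0∞) ≤ T.opNormB := by
  classical
  refine T.natCast_le_opNormB (f := fun w => if w = T.root then 1 else 2) (v := T.root) ?_ ?_
  · intro w
    by_cases hw : w = T.root
    · simp [deriv, hw]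
    · by_cases hp : T.par w = T.root
      · simp only [deriv, hw, hp, if_false, if_true]
        norm_num
      · simp [deriv, hw, hp]
  · have hs : ∀ w ∈ (T.locFin T.root).toFinset,
        (if w = T.root then (1 : ℂ) else 2) = 2 := by
      intro w hw
      simp only [Set.Finite.mem_toFinset, Set.mem_ofPred_eq] at hw
      rw [if_neg hw.1]
    simp only [deriv, bshift, if_true]
    rw [Finset.sum_congr rfl hs]
    simp [gamma, mul_comm]

open Classical in
/-- The extremal function at `v`: `2` at `v`, `3` on its children, `2` on its grandchildren, `0` on
its siblings, and `1` everywhere else (in particular at the parent of `v`). -/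
noncomputable def bump (v : T.V) : T.V → ℂ := fun w =>
  if w = v then 2 else if T.par w = v then 3 else if T.par (T.par w) = v then 2
  else if w ≠ T.root ∧ T.par w = T.par v then 0 else 1

lemma par_ne_self {v : T.V} (hv : v ≠ T.root) : T.par v ≠ v := fun h => by
  have := T.depth_par v hv
  rw [h] at this
  omega

lemma depth_par_le (w : T.V) : T.depth (T.par w) ≤ T.depth w := by
  by_cases h : w = T.root
  · rw [h, T.par_root]
  · have := T.depth_par w h
    omega

lemma ne_of_depth_lt {u v : T.V} (h : T.depth u < T.depth v) : u ≠ v := by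
  rintro rfl
  exact h.false

lemma bump_self (v : T.V) : T.bump v v = 2 := if_pos rfl

lemma bump_child {v w : T.V} (hv : v ≠ T.root) (h : T.par w = v) : T.bump v w = 3 := by
  have : w ≠ v := by
    rintro rfl
    exact T.par_ne_self hv h
  simp [bump, this, h]

lemma bump_grandchild {v w : T.V} (hv : v ≠ T.root) (h : T.par (T.par w) = v) :
    T.bump v w = 2 := by
  have h1 : T.par w ≠ v := by
    intro h'
    exact T.par_ne_self hv (by rw [h'] at h; exact h)
  simp [bump, h1, h]

lemma bump_parent {v : T.V} (hv : v ≠ T.root) : T.bump v (T.par v) = 1 := by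
  have h0 := T.depth_par v hv
  have h1 := T.depth_par_le (T.par v)
  have h2 := T.depth_par_le (T.par (T.par v))
  have e0 : T.par v ≠ v := T.par_ne_self hv
  have e1 : T.par (T.par v) ≠ v := T.ne_of_depth_lt (by omega)
  have e2 : T.par (T.par (T.par v)) ≠ v := T.ne_of_depth_lt (by omega)
  have e3 : ¬ (T.par v ≠ T.root ∧ T.par (T.par v) = T.par v) := fun h => T.par_ne_self h.1 h.2
  simp only [bump, e0, e1, e2, e3, if_false]

lemma bump_sibling {v w : T.V} (hv : v ≠ T.root) (hw : w ≠ T.root) (h : T.par w = T.par v)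
    (hwv : w ≠ v) : T.bump v w = 0 := by
  have h0 := T.depth_par v hv
  have h1 := T.depth_par_le (T.par v)
  have e1 : T.par v ≠ v := T.par_ne_self hv
  have e2 : T.par (T.par v) ≠ v := T.ne_of_depth_lt (by omega)
  simp [bump, hwv, h, e1, e2, hw]

lemma bump_root {v : T.V} (hv : v ≠ T.root) : T.bump v T.root = 1 := by
  simp [bump, T.par_root, hv.symm]

lemma norm_deriv_bump_le {v : T.V} (hv : v ≠ T.root) (w : T.V) :
    ‖T.deriv (T.bump v) w‖ ≤ 1 := by
  by_cases hw : w = T.root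
  · simp [deriv, hw, T.bump_root hv]
  simp only [deriv, hw, if_false]
  by_cases h1 : T.par w = v
  · rw [T.bump_child hv h1, h1, T.bump_self]
    norm_num
  by_cases h2 : T.par (T.par w) = v
  · rw [T.bump_grandchild hv h2, T.bump_child hv h2]
    norm_num
  by_cases h3 : T.par w = T.par v
  · rw [h3, T.bump_parent hv]
    by_cases hwv : w = v
    · rw [hwv, T.bump_self]
      norm_num
    · rw [T.bump_sibling hv hw h3 hwv]
      norm_num
  have hwv : w ≠ v := fun h => h3 (by rw [h])
  have hfw : T.bump v w = 1 := by simp [bump, hwv, h1, h2, h3]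
  rw [hfw]
  -- The parent of `w` is neither `v` nor one of its children, so `bump v` is `0`, `1` or `2` there.
  simp only [bump, h1, h2, if_false]
  split_ifs <;> norm_num

lemma deriv_bshift_bump {v : T.V} (hv : v ≠ T.root) :
    T.deriv (T.bshift (T.bump v)) v = 3 * (T.gamma v : ℂ) - 2 := by
  simp only [deriv, bshift, hv, if_false]
  congr 1
  · have hs : ∀ w ∈ (T.locFin v).toFinset, T.bump v w = 3 := by
      intro w hw
      simp only [Set.Finite.mem_toFinset, Set.mem_ofPred_eq] at hw
      exact T.bump_child hv hw.2
    rw [Finset.sum_congr rfl hs]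
    simp [gamma, mul_comm]
  · rw [Finset.sum_eq_single_of_mem v (by simp [hv]), T.bump_self]
    intro w hw hwv
    simp only [Set.Finite.mem_toFinset, Set.mem_ofPred_eq] at hw
    exact T.bump_sibling hv hw.1 hw.2 hwv

lemma three_mul_gamma_sub_two_le {v : T.V} (hv : v ≠ T.root) :
    ((3 * T.gamma v - 2 : ℕ) : ℝ≥0∞) ≤ T.opNormB := by
  -- For a leaf `v` the truncated subtraction makes the bound `0`.
  rcases Nat.eq_zero_or_pos (T.gamma v) with h | h
  · simp [h]
  · refine T.natCast_le_opNormB (T.norm_deriv_bump_le hv) (v := v) ?_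
    rw [T.deriv_bshift_bump hv, Nat.cast_sub (by omega)]
    push_cast
    rfl

end LipTree

/-- lower bound `‖B‖ ≥ max{2γ(o), 3Γ' - 2}` where
`Γ' = max{γ(v) : 0 < |v| ≤ N}`, for a tree homogeneous by sectors at level `N ≥ 1`. -/
theorem opNormB_lower_bound (T : LipTree) (N : ℕ) (hN1 : 1 ≤ N) (hN : T.HomBySectors N)
    (Γ' : ℕ)
    (hΓ' : IsGreatest {k : ℕ | ∃ v : T.V, 0 < T.depth v ∧ T.depth v ≤ N ∧ T.gamma v = k} Γ') :
    ((max (2 * T.gamma T.root) (3 * Γ' - 2) : ℕ) : ℝ≥0∞) ≤ T.opNormB := by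
  obtain ⟨v, hv0, -, rfl⟩ := hΓ'.1
  have hv : v ≠ T.root := by
    rintro rfl
    exact hv0.ne' T.depth_root
  rcases max_choice (2 * T.gamma T.root) (3 * T.gamma v - 2) with h | h <;> rw [h]
  · exact T.two_mul_gamma_root_le
  · exact T.three_mul_gamma_sub_two_le hv
end

section
/- Let T be a rooted, countably infinite, locally finite tree which is homogeneous by sectors at the level N, and let Γ'' = max{ γ(v) : v ∈ T, |v| = 1 }. Then the operator norm of the backward shift B on 𝓛 satisfies ‖B‖ ≥ Γ'' + 2γ(o) − 2. -/
/-!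
The bound is attained already by the derivative of `B f` at a vertex `v` of level one with
`γ(v) = Γ''`, for a suitable unit vector `f`. Take `f = -1` at the root, `f(v) = 0`, `f = 1` at the
proper descendants of `v`, and `f = -2` at all remaining vertices. Along each edge `f` changes by
at most one, so `‖f‖ ≤ 1` (`LipTree.lnorm_testFn_le`). On the other hand
`(B f)(v) = Γ''`, while `(B f)(o) = -2 (γ(o) - 1)`, since `v` is the only child of the root
where `f` is not `-2`. Hence `(B f)'(v) = Γ'' + 2 γ(o) - 2`
(`LipTree.deriv_bshift_testFn`).
-/

open scoped ENNReal NNReal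

namespace LipTree

variable (T : LipTree)

open Classical in
/-- The extremal function attached to `v`: `-1` at the root, `0` at `v`, `1` at the proper
descendants of `v`, and `-2` elsewhere. It is meant for `v` of depth one. -/
noncomputable def testFn (v : T.V) : T.V → ℂ := fun w =>
  if w = T.root then -1 else if w = v then 0 else if w ∈ T.sector v then 1 else -2

variable {T}

lemma ne_root_of_depth {v : T.V} (hv : T.depth v = 1) : v ≠ T.root := by
  rintro rfl
  simp [T.depth_root] at hv

lemma par_eq_root {v : T.V} (hv : T.depth v = 1) : T.par v = T.root := by
  by_contra h
  have h1 := T.depth_par v (ne_root_of_depth hv)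
  have h2 := T.depth_par _ h
  omega

lemma root_notMem_sector {v : T.V} (hv : v ≠ T.root) : T.root ∉ T.sector v := by
  rintro ⟨n, hn⟩
  rw [Function.iterate_fixed T.par_root] at hn
  exact hv hn.symm

lemma mem_sector_self (v : T.V) : v ∈ T.sector v := ⟨0, rfl⟩

/-- A vertex other than `v` descends from `v` exactly when its parent does. -/
lemma mem_sector_iff_par {v w : T.V} (hw : w ≠ v) : w ∈ T.sector v ↔ T.par w ∈ T.sector v := by
  constructor
  · rintro ⟨n, hn⟩
    cases n with
    | zero => exact absurd hn hw
    | succ n => exact ⟨n, hn⟩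
  · rintro ⟨n, hn⟩
    exact ⟨n + 1, hn⟩

lemma lnorm_testFn_le {v : T.V} (hv : T.depth v = 1) : T.lnorm (T.testFn v) ≤ 1 := by
  have hr := ne_root_of_depth hv
  refine iSup_le fun w => ?_
  suffices h : ‖T.deriv (T.testFn v) w‖ ≤ 1 by exact_mod_cast h
  by_cases hw : w = T.root
  · simp [deriv, testFn, hw]
  by_cases hwv : w = v
  · subst hwv
    simp [deriv, testFn, hw, par_eq_root hv]
  have hs := mem_sector_iff_par hwv
  by_cases hp : T.par w = T.root
  · have h1 : w ∉ T.sector v := by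
      rw [hs, hp]
      exact root_notMem_sector hr
    simp only [deriv, testFn, hw, hwv, h1, hp, if_true, if_false]
    norm_num
  by_cases hpv : T.par w = v
  · have h1 : w ∈ T.sector v := by
      rw [hs, hpv]
      exact mem_sector_self v
    simp [deriv, testFn, hw, hwv, h1, hpv, hr]
  · by_cases h1 : T.par w ∈ T.sector v
    · simp [deriv, testFn, hw, hwv, hp, hpv, hs.2 h1, h1]
    · simp [deriv, testFn, hw, hwv, hp, hpv, mt hs.1 h1, h1]

lemma deriv_bshift_testFn {v : T.V} (hv : T.depth v = 1) :
    T.deriv (T.bshift (T.testFn v)) v = T.gamma v + 2 * T.gamma T.root - 2 := by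
  classical
  have hr := ne_root_of_depth hv
  have h1 : T.bshift (T.testFn v) v = T.gamma v := by
    have h : ∀ w ∈ (T.locFin v).toFinset, T.testFn v w = 1 := by
      intro w hw
      obtain ⟨hw, hp⟩ := (Set.Finite.mem_toFinset _).1 hw
      have hwv : w ≠ v := by
        rintro rfl
        have := T.depth_par w hr
        rw [hp] at this
        omega
      have hs : w ∈ T.sector v := ⟨1, hp⟩
      simp [testFn, hw, hwv, hs]
    simp [bshift, Finset.sum_congr rfl h, gamma]
  have h2 : T.bshift (T.testFn v) T.root = 2 - 2 * T.gamma T.root := by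
    -- On the children of the root, `f` is the constant `-2` plus twice the indicator of `v`.
    have h : ∀ w ∈ (T.locFin T.root).toFinset,
        T.testFn v w = (if w = v then 2 else 0) - 2 := by
      intro w hw
      obtain ⟨hw, hp⟩ := (Set.Finite.mem_toFinset _).1 hw
      by_cases hwv : w = v
      · simp [testFn, hwv, hr]
      · have hs : w ∉ T.sector v := by
          rw [mem_sector_iff_par hwv, hp]
          exact root_notMem_sector hr
        simp [testFn, hw, hwv, hs]
    have hmem : v ∈ (T.locFin T.root).toFinset :=
      (Set.Finite.mem_toFinset _).2 ⟨hr, par_eq_root hv⟩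
    rw [bshift, Finset.sum_congr rfl h, Finset.sum_sub_distrib, Finset.sum_ite_eq', if_pos hmem,
      Finset.sum_const, nsmul_eq_mul, gamma]
    ring
  rw [deriv, if_neg hr, par_eq_root hv, h1, h2]
  ring

lemma gamma_root_pos {v : T.V} (hv : T.depth v = 1) : 0 < T.gamma T.root :=
  Finset.card_pos.2 ⟨v, (Set.Finite.mem_toFinset _).2 ⟨ne_root_of_depth hv, par_eq_root hv⟩⟩

end LipTree

/-- lower bound `‖B‖ ≥ Γ'' + 2γ(o) - 2` where
`Γ'' = max{γ(v) : |v| = 1}`, for a tree homogeneous by sectors at level `N`. -/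
theorem opNormB_lower_bound' (T : LipTree) (N : ℕ) (hN : T.HomBySectors N)
    (Γ'' : ℕ)
    (hΓ'' : IsGreatest {k : ℕ | ∃ v : T.V, T.depth v = 1 ∧ T.gamma v = k} Γ'') :
    ((Γ'' + 2 * T.gamma T.root - 2 : ℕ) : ℝ≥0∞) ≤ T.opNormB := by
  obtain ⟨⟨v, hv, rfl⟩, -⟩ := hΓ''
  have hpos := LipTree.gamma_root_pos hv
  -- The truncated subtraction is a genuine one because the root has a child.
  have key : T.deriv (T.bshift (T.testFn v)) v
      = ((T.gamma v + 2 * T.gamma T.root - 2 : ℕ) : ℂ) := by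
    rw [LipTree.deriv_bshift_testFn hv, Nat.cast_sub (by omega)]
    push_cast
    ring
  calc ((T.gamma v + 2 * T.gamma T.root - 2 : ℕ) : ℝ≥0∞)
      = (‖T.deriv (T.bshift (T.testFn v)) v‖₊ : ℝ≥0∞) := by
        rw [key, Complex.nnnorm_natCast, ENNReal.coe_natCast]
    _ ≤ T.lnorm (T.bshift (T.testFn v)) :=
        le_iSup (fun w => (‖T.deriv (T.bshift (T.testFn v)) w‖₊ : ℝ≥0∞)) v
    _ ≤ T.opNormB :=
        le_iSup₂ (f := fun f (_ : f ∈ {f : T.V → ℂ | T.lnorm f ≤ 1}) => T.lnorm (T.bshift f))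
          (T.testFn v) (LipTree.lnorm_testFn_le hv)
end

section
/- Let T be a rooted tree which is homogeneous of order γ (γ ≥ 1) and let B be the backward shift. (a) For every λ ∈ ℂ with |λ| ≤ γ there exists a nonzero f ∈ 𝓛 with Bf = λ·f; in fact f(v) = (λ/γ)^{|v|} works. (b) For every λ ∈ ℂ with |λ| < γ or λ = γ, there exists a nonzero f ∈ 𝓛₀ with Bf = λ·f. -/
/-! Write `r = λ/γ`, so `λ = γ r`. The function `v ↦ r ^ |v|` takes the value `r ^ (|v| + 1)` at
each of the `γ` children of `v`, so `B` multiplies it by `γ r = λ`. Its derivative is also radial: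
it is `1` at the root and `r ^ n * (r - 1)` at depth `n + 1`. This is bounded by `2` when `‖r‖ ≤ 1`,
and it tends to `0` as `n → ∞` when `‖r‖ < 1` or `r = 1`. Thus the same function serves both
parts. -/

open scoped ENNReal NNReal

namespace LipTree

/-- The derivative of `v ↦ r ^ |v|` as a function of the depth. -/
def radialDeriv (r : ℂ) : ℕ → ℂ
  | 0 => 1
  | n + 1 => r ^ n * (r - 1)

theorem deriv_pow_depth (T : LipTree) (r : ℂ) :
    T.deriv (fun v => r ^ T.depth v) = radialDeriv r ∘ T.depth := by
  funext v
  by_cases hv : v = T.root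
  · simp [deriv, hv, T.depth_root, radialDeriv]
  · simp only [deriv, hv, if_false, Function.comp_apply, T.depth_par v hv, radialDeriv]
    ring

theorem norm_radialDeriv_le {r : ℂ} (hr : ‖r‖ ≤ 1) (n : ℕ) : ‖radialDeriv r n‖ ≤ 2 := by
  cases n with
  | zero => simp [radialDeriv]
  | succ n =>
    have h1 : ‖r‖ ^ n ≤ 1 := pow_le_one₀ (norm_nonneg r) hr
    have h2 : ‖r - 1‖ ≤ 2 := by
      have h := norm_sub_le r 1
      rw [norm_one] at h
      linarith
    calc ‖radialDeriv r (n + 1)‖ = ‖r‖ ^ n * ‖r - 1‖ := by simp [radialDeriv]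
      _ ≤ 1 * 2 := by gcongr
      _ = 2 := one_mul 2

theorem tendsto_radialDeriv {r : ℂ} (hr : ‖r‖ < 1 ∨ r = 1) :
    Filter.Tendsto (radialDeriv r) Filter.atTop (nhds 0) := by
  rw [← Filter.tendsto_add_atTop_iff_nat 1]
  rcases hr with hr | rfl
  · simpa [radialDeriv] using (tendsto_pow_atTop_nhds_zero_of_norm_lt_one hr).mul_const (r - 1)
  · simp [radialDeriv]

theorem pow_depth_ne_zero (T : LipTree) (r : ℂ) : (fun v => r ^ T.depth v) ≠ (0 : T.V → ℂ) := by
  intro h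
  simpa [T.depth_root] using congrFun h T.root

theorem pow_depth_mem_Lip (T : LipTree) {r : ℂ} (hr : ‖r‖ ≤ 1) :
    (fun v => r ^ T.depth v) ∈ T.Lip := by
  have h : T.lnorm (fun v => r ^ T.depth v) ≤ ((2 : ℝ≥0) : ℝ≥0∞) := by
    refine iSup_le fun v => ?_
    rw [deriv_pow_depth]
    exact ENNReal.coe_le_coe.2 (norm_radialDeriv_le hr _)
  exact h.trans_lt ENNReal.coe_lt_top

theorem pow_depth_mem_Lip0 (T : LipTree) {r : ℂ} (hr : ‖r‖ < 1 ∨ r = 1) :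
    (fun v => r ^ T.depth v) ∈ T.Lip0 := by
  refine ⟨T.pow_depth_mem_Lip ?_, ?_⟩
  · rcases hr with hr | rfl
    · exact hr.le
    · simp
  · rw [deriv_pow_depth]
    exact (tendsto_radialDeriv hr).comp Filter.tendsto_comap

theorem bshift_pow_depth (T : LipTree) {γ : ℕ} (hom : T.Homogeneous γ) (r : ℂ) :
    T.bshift (fun v => r ^ T.depth v) = ((γ : ℂ) * r) • (fun v => r ^ T.depth v) := by
  funext v
  have hchild : ∀ w ∈ (T.locFin v).toFinset, r ^ T.depth w = r ^ (T.depth v + 1) := by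
    intro w hw
    obtain ⟨hroot, hpar⟩ := (T.locFin v).mem_toFinset.1 hw
    rw [T.depth_par w hroot, hpar]
  have hcard : (T.locFin v).toFinset.card = γ := hom v
  simp only [bshift, Finset.sum_congr rfl hchild, Finset.sum_const, hcard, nsmul_eq_mul,
    Pi.smul_apply, smul_eq_mul]
  ring

end LipTree

/-- on a homogeneous tree of order `γ ≥ 1`: (a) every `λ` with
`|λ| ≤ γ` is an eigenvalue of `B` on `𝓛` with eigenvector `v ↦ (λ/γ)^{|v|}`;
(b) every `λ` with `|λ| < γ` or `λ = γ` is an eigenvalue of `B` on `𝓛₀`. -/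
theorem bshift_eigenvalues (T : LipTree) (γ : ℕ) (hγ : 1 ≤ γ) (hom : T.Homogeneous γ) :
    (∀ lam : ℂ, ‖lam‖ ≤ (γ : ℝ) →
      (fun v => (lam / (γ : ℂ)) ^ T.depth v) ≠ (0 : T.V → ℂ) ∧
      (fun v => (lam / (γ : ℂ)) ^ T.depth v) ∈ T.Lip ∧
      T.bshift (fun v => (lam / (γ : ℂ)) ^ T.depth v) =
        lam • (fun v => (lam / (γ : ℂ)) ^ T.depth v)) ∧
    (∀ lam : ℂ, (‖lam‖ < (γ : ℝ) ∨ lam = (γ : ℂ)) →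
      ∃ f ∈ T.Lip0, f ≠ 0 ∧ T.bshift f = lam • f) := by
  have hpos : (0 : ℝ) < γ := by exact_mod_cast hγ
  have hne : (γ : ℂ) ≠ 0 := by exact_mod_cast hpos.ne'
  have hnorm : ∀ lam : ℂ, ‖lam / (γ : ℂ)‖ = ‖lam‖ / γ := fun lam => by simp
  have heig : ∀ lam : ℂ, T.bshift (fun v => (lam / (γ : ℂ)) ^ T.depth v) =
      lam • (fun v => (lam / (γ : ℂ)) ^ T.depth v) := fun lam => by
    rw [T.bshift_pow_depth hom, mul_div_cancel₀ _ hne]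
  refine ⟨fun lam hlam => ⟨T.pow_depth_ne_zero _, T.pow_depth_mem_Lip ?_, heig lam⟩,
    fun lam hlam => ⟨_, T.pow_depth_mem_Lip0 ?_, T.pow_depth_ne_zero _, heig lam⟩⟩
  · rw [hnorm]
    exact (div_le_one hpos).2 hlam
  · rcases hlam with hlam | rfl
    · left
      rw [hnorm]
      exact (div_lt_one hpos).2 hlam
    · exact Or.inr (div_self hne)
end

section
/- Let T be a rooted tree which is homogeneous of order γ (γ ≥ 1) and let B be the backward shift on 𝓛₀. Then λ ∈ ℂ is an eigenvalue of B on 𝓛₀ (i.e., there exists a nonzero f ∈ 𝓛₀ with Bf = λ·f) if and only if |λ| < γ or λ = γ. In particular, if |λ| = γ and λ ≠ γ, then the only f ∈ 𝓛₀ with Bf = λ·f is f = 0. -/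
/-! Put `r = λ / γ`.

If `|r| < 1` or `r = 1`, the radial function `v ↦ r ^ |v|` is an eigenvector: each vertex has `γ`
children, so `B` multiplies it by `γ r = λ`, and its derivative `r ^ (|v| - 1) (r - 1)` tends to `0`
(`LipTree.radial_mem_Lip0`, `LipTree.bshift_radial`).

Conversely let `|λ| ≥ γ`, `λ ≠ γ` and `B f = λ f` with `f ∈ 𝓛₀`. Subtracting `γ f(v)` from
`B f (v) = λ f(v)` gives `(λ - γ) f(v) = ∑ f'(w)` over the `γ` children `w` of `v`; as `f' → 0`, also
`f(v) → 0` as `|v| → ∞` (`LipTree.eventually_norm_lt`). On the other hand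
`γ |f(v)| ≤ |λ f(v)| ≤ ∑ |f(w)|`, so some child `w` of `v` has `|f(w)| ≥ |f(v)|`, and `|f|` does not
decrease along a suitable infinite path from `v` (`LipTree.exists_deep_norm_ge`). Hence `f = 0`. -/


open scoped ENNReal NNReal

namespace LipTree

variable (T : LipTree)

lemma mem_locFin (v w : T.V) : w ∈ (T.locFin v).toFinset ↔ w ≠ T.root ∧ T.par w = v := by simp

lemma depth_child {v w : T.V} (h : w ∈ (T.locFin v).toFinset) : T.depth w = T.depth v + 1 := by
  obtain ⟨h1, rfl⟩ := (T.mem_locFin v w).1 h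
  exact T.depth_par w h1

lemma ne_root_of_depth_pos {v : T.V} (h : 1 ≤ T.depth v) : v ≠ T.root := by
  rintro rfl
  simp [T.depth_root] at h

lemma deriv_radial (r : ℂ) {v : T.V} (hv : v ≠ T.root) :
    T.deriv (fun v => r ^ T.depth v) v = r ^ (T.depth v - 1) * (r - 1) := by
  simp only [deriv, if_neg hv, T.depth_par v hv, Nat.add_sub_cancel]
  ring

lemma radial_mem_Lip0 (r : ℂ) (hr : ‖r‖ < 1 ∨ r = 1) : (fun v => r ^ T.depth v) ∈ T.Lip0 := by
  have hr1 : ‖r‖ ≤ 1 := by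
    rcases hr with h | rfl
    · exact h.le
    · simp
  refine ⟨lt_of_le_of_lt (iSup_le fun v => ?_) (ENNReal.coe_lt_top (r := 2)), ?_⟩
  · rw [ENNReal.coe_le_coe, ← NNReal.coe_le_coe, coe_nnnorm, NNReal.coe_ofNat]
    by_cases hv : v = T.root
    · subst hv
      simp [deriv, T.depth_root]
    · rw [T.deriv_radial r hv, norm_mul, norm_pow]
      have h1 : ‖r‖ ^ (T.depth v - 1) ≤ 1 := pow_le_one₀ (norm_nonneg _) hr1
      have h2 : ‖r - 1‖ ≤ 2 := (norm_sub_le r 1).trans (by simp; linarith)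
      nlinarith [norm_nonneg (r - 1)]
  · have hlim : Filter.Tendsto (fun n : ℕ => r ^ (n - 1) * (r - 1)) Filter.atTop (nhds 0) := by
      rcases hr with h | rfl
      · simpa using ((tendsto_pow_atTop_nhds_zero_of_norm_lt_one h).comp
          (Filter.tendsto_sub_atTop_nat 1)).mul_const (r - 1)
      · simp
    refine (hlim.comp Filter.tendsto_comap).congr' ?_
    filter_upwards [Filter.tendsto_comap.eventually (Filter.eventually_ge_atTop 1)] with v hv
    exact (T.deriv_radial r (T.ne_root_of_depth_pos hv)).symm

variable {T} {γ : ℕ} {lam : ℂ} {f : T.V → ℂ}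

lemma bshift_radial (hom : T.Homogeneous γ) (r : ℂ) :
    T.bshift (fun v => r ^ T.depth v) = ((γ : ℂ) * r) • fun v => r ^ T.depth v := by
  funext v
  have hcard : (T.locFin v).toFinset.card = γ := hom v
  simp only [bshift, Pi.smul_apply, smul_eq_mul]
  rw [Finset.sum_congr rfl fun w hw => by rw [T.depth_child hw], Finset.sum_const, hcard,
    nsmul_eq_mul]
  ring

lemma sub_mul_eq_sum_deriv (hom : T.Homogeneous γ) (hf : T.bshift f = lam • f) (v : T.V) :
    (lam - γ) * f v = ∑ w ∈ (T.locFin v).toFinset, T.deriv f w := by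
  have hcard : (T.locFin v).toFinset.card = γ := hom v
  have hB : ∑ w ∈ (T.locFin v).toFinset, f w = lam * f v := congrFun hf v
  have hd : ∀ w ∈ (T.locFin v).toFinset, T.deriv f w = f w - f v := fun w hw => by
    obtain ⟨h1, h2⟩ := (T.mem_locFin v w).1 hw
    simp [deriv, h1, h2]
  rw [Finset.sum_congr rfl hd, Finset.sum_sub_distrib, hB, Finset.sum_const, hcard, nsmul_eq_mul]
  ring

/-- An eigenfunction in `𝓛₀` for an eigenvalue other than `γ` tends to `0` at infinity. -/
lemma eventually_norm_lt (hγ : 1 ≤ γ) (hom : T.Homogeneous γ) (hne : lam ≠ γ) (hf0 : f ∈ T.Lip0)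
    (hf : T.bshift f = lam • f) {c : ℝ} (hc : 0 < c) :
    ∃ N, ∀ v, N ≤ T.depth v → ‖f v‖ < c := by
  have hγ' : (0 : ℝ) < γ := by exact_mod_cast hγ
  have hl : 0 < ‖lam - γ‖ := norm_pos_iff.2 (sub_ne_zero.2 hne)
  -- the bound on `f'` that, summed over `γ` children, gives `‖lam - γ‖ * (c / 2)`
  have hε : 0 < ‖lam - γ‖ * (c / 2) / γ := by positivity
  obtain ⟨N, hN⟩ := Filter.eventually_atTop.1
    (Filter.eventually_comap.1 (Metric.tendsto_nhds.1 hf0.2 _ hε))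
  refine ⟨N, fun v hv => ?_⟩
  have h1 : ‖lam - γ‖ * ‖f v‖ ≤ ‖lam - γ‖ * (c / 2) := by
    rw [← norm_mul, sub_mul_eq_sum_deriv hom hf v]
    refine (norm_sum_le_of_le _ fun w hw => ?_).trans_eq
      (b := ∑ _w ∈ (T.locFin v).toFinset, ‖lam - γ‖ * (c / 2) / γ) ?_
    · have := hN (T.depth w) (by rw [T.depth_child hw]; omega) w rfl
      rw [dist_zero_right] at this
      exact this.le
    · have hcard : (T.locFin v).toFinset.card = γ := hom v
      rw [Finset.sum_const, hcard, nsmul_eq_mul]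
      field_simp
  have := le_of_mul_le_mul_left h1 hl
  linarith

lemma exists_child_norm_ge (hγ : 1 ≤ γ) (hom : T.Homogeneous γ) (hle : (γ : ℝ) ≤ ‖lam‖)
    (hf : T.bshift f = lam • f) (v : T.V) :
    ∃ w ∈ (T.locFin v).toFinset, ‖f v‖ ≤ ‖f w‖ := by
  have hcard : (T.locFin v).toFinset.card = γ := hom v
  have hB : ∑ w ∈ (T.locFin v).toFinset, f w = lam * f v := congrFun hf v
  refine Finset.exists_le_of_sum_le (Finset.card_pos.1 (by omega)) ?_
  calc ∑ _w ∈ (T.locFin v).toFinset, ‖f v‖ = γ * ‖f v‖ := by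
        rw [Finset.sum_const, hcard, nsmul_eq_mul]
    _ ≤ ‖lam‖ * ‖f v‖ := by gcongr
    _ = ‖∑ w ∈ (T.locFin v).toFinset, f w‖ := by rw [hB, norm_mul]
    _ ≤ _ := norm_sum_le _ _

lemma exists_deep_norm_ge (hγ : 1 ≤ γ) (hom : T.Homogeneous γ) (hle : (γ : ℝ) ≤ ‖lam‖)
    (hf : T.bshift f = lam • f) (v : T.V) (n : ℕ) :
    ∃ w, n ≤ T.depth w ∧ ‖f v‖ ≤ ‖f w‖ := by
  induction n with
  | zero => exact ⟨v, Nat.zero_le _, le_rfl⟩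
  | succ n ih =>
    obtain ⟨u, hu, hvu⟩ := ih
    obtain ⟨w, hw, huw⟩ := exists_child_norm_ge hγ hom hle hf u
    exact ⟨w, by rw [T.depth_child hw]; omega, hvu.trans huw⟩

lemma eq_zero_of_le_norm (hγ : 1 ≤ γ) (hom : T.Homogeneous γ) (hle : (γ : ℝ) ≤ ‖lam‖)
    (hne : lam ≠ γ) (hf0 : f ∈ T.Lip0) (hf : T.bshift f = lam • f) : f = 0 := by
  funext v
  by_contra hv
  obtain ⟨N, hN⟩ := eventually_norm_lt hγ hom hne hf0 hf (norm_pos_iff.2 hv)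
  obtain ⟨w, hw, hvw⟩ := exists_deep_norm_ge hγ hom hle hf v N
  exact (hN w hw).not_ge hvw

end LipTree

/-- on a homogeneous tree of order `γ ≥ 1`, `λ` is an eigenvalue of
`B` on `𝓛₀` iff `|λ| < γ` or `λ = γ`; in particular if `|λ| = γ` and `λ ≠ γ` then
the only `f ∈ 𝓛₀` with `Bf = λf` is `f = 0`. -/
theorem bshift_point_spectrum_lip0 (T : LipTree) (γ : ℕ) (hγ : 1 ≤ γ)
    (hom : T.Homogeneous γ) (lam : ℂ) :
    ((∃ f ∈ T.Lip0, f ≠ 0 ∧ T.bshift f = lam • f) ↔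
      (‖lam‖ < (γ : ℝ) ∨ lam = (γ : ℂ))) ∧
    (‖lam‖ = (γ : ℝ) → lam ≠ (γ : ℂ) →
      ∀ f ∈ T.Lip0, T.bshift f = lam • f → f = 0) := by
  refine ⟨⟨?_, fun h => ?_⟩, fun heq hne f hf0 hf =>
    LipTree.eq_zero_of_le_norm hγ hom heq.ge hne hf0 hf⟩
  · rintro ⟨f, hf0, hfne, hf⟩
    by_contra! h
    exact hfne (LipTree.eq_zero_of_le_norm hγ hom h.1 h.2 hf0 hf)
  · have hγ' : (0 : ℝ) < γ := by exact_mod_cast hγ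
    have hγc : (γ : ℂ) ≠ 0 := by exact_mod_cast hγ'.ne'
    refine ⟨fun v => (lam / γ) ^ T.depth v, T.radial_mem_Lip0 _ ?_, fun h0 => ?_, ?_⟩
    · rcases h with h | rfl
      · left
        rwa [norm_div, Complex.norm_natCast, div_lt_one hγ']
      · right
        exact div_self hγc
    · have := congrFun h0 T.root
      simp [T.depth_root] at this
    · rw [LipTree.bshift_radial hom, mul_div_cancel₀ _ hγc]
end

section
/- Let T be a rooted, countably infinite, locally finite tree and let S be the forward shift on 𝓛₀. Then S is not hypercyclic: there is no f ∈ 𝓛₀ such that the orbit {Sⁿf : n ∈ ℕ} is dense in 𝓛₀ with respect to the norm ‖·‖. -/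
/-!
Every `Sⁿ f` with `n ≥ 1` vanishes at the root, and evaluation at the root is bounded by the
Lipschitz norm (`nnnorm_root_le_lnorm`). Hence the values at the root along an orbit lie in
`{f(o), 0}`. Constant functions belong to `𝓛₀` (`const_mem_Lip0`), so the constant
`c = |f(o)| + 1`, which is at distance at least `1` from both values, cannot be approximated by
the orbit to within `1`.
-/

open scoped ENNReal NNReal

namespace LipTree

theorem nnnorm_root_le_lnorm (T : LipTree) (h : T.V → ℂ) :
    (‖h T.root‖₊ : ℝ≥0∞) ≤ T.lnorm h := by
  have := le_iSup (fun v => (‖T.deriv h v‖₊ : ℝ≥0∞)) T.root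
  simpa [lnorm, deriv] using this

theorem const_mem_Lip0 (T : LipTree) (c : ℂ) : (fun _ => c) ∈ T.Lip0 := by
  refine ⟨?_, ?_⟩
  · refine lt_of_le_of_lt (iSup_le fun v => ?_) (ENNReal.coe_lt_top (r := ‖c‖₊))
    by_cases hv : v = T.root <;> simp [deriv, hv]
  · -- The derivative vanishes off the root, that is, at every depth at least `1`.
    refine tendsto_const_nhds.congr' ?_
    filter_upwards [Filter.preimage_mem_comap (Filter.eventually_ge_atTop 1)] with v hv
    have hr : v ≠ T.root := by
      rintro rfl
      simp [T.depth_root] at hv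
    simp [deriv, hr]

end LipTree

/-- the forward shift is not hypercyclic on `𝓛₀`. -/
theorem fshift_not_hypercyclic (T : LipTree) : ¬ T.Hypercyclic T.fshift := by
  rintro ⟨f, -, hf⟩
  set r : ℝ := ‖f T.root‖ + 1
  have hr : 1 ≤ r := by simp [r]
  obtain ⟨n, hn⟩ := hf (fun _ => (r : ℂ)) (T.const_mem_Lip0 _) 1 one_pos
  have hlt := (T.nnnorm_root_le_lnorm _).trans_lt hn
  have hlt' : ‖T.fshift^[n] f T.root - (r : ℂ)‖ < 1 := by
    have h : ‖T.fshift^[n] f T.root - (r : ℂ)‖₊ < 1 := by exact_mod_cast hlt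
    exact_mod_cast h
  have htri := norm_sub_norm_le (r : ℂ) (T.fshift^[n] f T.root)
  rw [norm_sub_rev, Complex.norm_of_nonneg (by linarith)] at htri
  cases n with
  | zero =>
    simp only [Function.iterate_zero, id_eq] at htri hlt'
    simp only [r] at htri hlt'
    linarith
  | succ n =>
    have h0 : T.fshift^[n + 1] f T.root = 0 := by
      rw [Function.iterate_succ_apply']
      simp [LipTree.fshift]
    rw [h0] at htri hlt'
    rw [norm_zero] at htri
    linarith
end
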